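/- arXiv:2511.20932 — 2 statements merged into one kernel-verified Lean document; each statement's English description precedes it below -/
import Mathlib

section
/- For fixed n, the expected number of calls to complete an (n,m)-Bingo card is a linear function of m: there exist real numbers a_n = n·(1 − S_n) and b_n = 1 − S_n, depending only on n (in particular independent of m and of the chosen card), such that for every m ≥ n and every (n,m)-Bingo card, E[B] = a_n·m + b_n. -/
open Finset

/-- The row of an `n × n` Bingo board through index `i`. -/
def bingoRow (n : ℕ) (i : Fin n) : Finset (Fin n × Fin n) :=
  Finset.univ.filter (fun s => s.1 = i)

/-- The column of an `n × n` Bingo board through index `j`. -/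
def bingoCol (n : ℕ) (j : Fin n) : Finset (Fin n × Fin n) :=
  Finset.univ.filter (fun s => s.2 = j)

/-- The main diagonal `{(i,i)}`. -/
def bingoDiag (n : ℕ) : Finset (Fin n × Fin n) :=
  Finset.univ.filter (fun s => (s.2 : ℕ) = (s.1 : ℕ))

/-- The anti-diagonal `{(i, n-1-i)}`. -/
def bingoAntiDiag (n : ℕ) : Finset (Fin n × Fin n) :=
  Finset.univ.filter (fun s => (s.2 : ℕ) = n - 1 - (s.1 : ℕ))

/-- The set `𝓛` of winning lines: `n` rows, `n` columns and the two diagonals. -/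
def bingoLines (n : ℕ) : Finset (Finset (Fin n × Fin n)) :=
  (Finset.univ.image (bingoRow n)) ∪ (Finset.univ.image (bingoCol n)) ∪
    {bingoDiag n, bingoAntiDiag n}

/-- An `(n,m)`-Bingo card: an injective assignment of numbers such that column `j`
only uses numbers in `[m*j, m*(j+1))`. -/
def IsBingoCard (n m : ℕ) (c : Fin n × Fin n → Fin (m * n)) : Prop :=
  Function.Injective c ∧
    ∀ i j : Fin n, m * (j : ℕ) ≤ (c (i, j) : ℕ) ∧ (c (i, j) : ℕ) < m * ((j : ℕ) + 1)

/-- Bingo is achieved within the first `k` calls of `σ`: some winning line has all of its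
numbers among `σ 0, …, σ (k-1)`. -/
def BingoWins (n m : ℕ) (c : Fin n × Fin n → Fin (m * n))
    (σ : Equiv.Perm (Fin (m * n))) (k : ℕ) : Prop :=
  ∃ L ∈ bingoLines n, ∀ s ∈ L, ∃ t : Fin (m * n), (t : ℕ) < k ∧ σ t = c s

/-- `S_n = ∑_{∅ ≠ X ⊆ 𝓛} (-1)^{|X|+1} / (m(X)+1)`, where `m(X)` is the number of squares
covered by the union of the lines in `X`. -/
noncomputable def Sn (n : ℕ) : ℝ :=
  ∑ X ∈ (bingoLines n).powerset.filter (fun X => X.Nonempty),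
    (-1 : ℝ) ^ (X.card + 1) / (((X.sup id).card : ℝ) + 1)

theorem perm_count_symm (N : ℕ) (j : ℕ) (A A' : Finset (Fin N)) (h : A.card = A'.card) :
    (univ.filter (fun σ : Equiv.Perm (Fin N) => ∀ a ∈ A, (σ.symm a : ℕ) < j)).card =
    (univ.filter (fun σ : Equiv.Perm (Fin N) => ∀ a ∈ A', (σ.symm a : ℕ) < j)).card := by
  classical
  have e : {x // x ∈ A} ≃ {x // x ∈ A'} := Fintype.equivOfCardEq (by simpa using h)
  let τ : Equiv.Perm (Fin N) := e.extendSubtype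
  have hτ : ∀ x, x ∈ A ↔ τ x ∈ A' := fun x =>
    ⟨fun hx => e.extendSubtype_mem x hx, fun hx => by
      by_contra hc
      exact e.extendSubtype_not_mem x hc hx⟩
  refine Finset.card_equiv (Equiv.mulLeft τ) ?_
  intro σ
  simp only [mem_filter, mem_univ, true_and, Equiv.coe_mulLeft]
  constructor
  · intro H a ha
    have := H (τ.symm a) ((hτ _).2 (by simpa using ha))
    simpa [Equiv.Perm.mul_def] using this
  · intro H a ha
    have := H (τ a) ((hτ _).1 ha)
    simpa [Equiv.Perm.mul_def] using this

theorem perm_count (N : ℕ) (j : ℕ) (hj : j ≤ N) (A : Finset (Fin N)) :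
    (univ.filter (fun σ : Equiv.Perm (Fin N) => ∀ a ∈ A, (σ.symm a : ℕ) < j)).card *
      N.choose A.card = N.factorial * j.choose A.card := by
  classical
  have h1 : ∑ A' ∈ (univ : Finset (Fin N)).powersetCard A.card,
      (univ.filter (fun σ : Equiv.Perm (Fin N) => ∀ a ∈ A', (σ.symm a : ℕ) < j)).card =
      (univ.filter (fun σ : Equiv.Perm (Fin N) => ∀ a ∈ A, (σ.symm a : ℕ) < j)).card *
      N.choose A.card := by
    rw [Finset.sum_congr rfl (fun A' hA' => perm_count_symm N j A' A (mem_powersetCard.1 hA').2)]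
    simp [mul_comm]
  rw [← h1]
  simp only [Finset.card_filter]
  rw [Finset.sum_comm]
  have h2 : ∀ σ : Equiv.Perm (Fin N), ∑ A' ∈ (univ : Finset (Fin N)).powersetCard A.card,
      (if ∀ a ∈ A', (σ.symm a : ℕ) < j then 1 else 0) = j.choose A.card := by
    intro σ
    rw [← Finset.card_filter]
    have hc : (univ.filter (fun a : Fin N => (σ.symm a : ℕ) < j)).card = j := by
      have : (univ.filter (fun a : Fin N => (σ.symm a : ℕ) < j)).card =
          (univ.filter (fun a : Fin N => (a : ℕ) < j)).card :=
        Finset.card_equiv σ.symm (by simp)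
      rw [this, Fin.card_filter_val_lt]
      omega
    conv_rhs => rw [← hc, ← Finset.card_powersetCard]
    congr 1
    ext A'
    simp only [mem_filter, mem_powersetCard, subset_univ, true_and]
    constructor
    · rintro ⟨h, h'⟩
      exact ⟨fun a ha => by simpa using h' a ha, h⟩
    · rintro ⟨h, h'⟩
      exact ⟨h', fun a ha => by simpa using h ha⟩
  rw [Finset.sum_congr rfl (fun σ _ => h2 σ)]
  simp [Fintype.card_perm]

theorem perm_sum (N : ℕ) (A : Finset (Fin N)) :
    ∑ σ : Equiv.Perm (Fin N),
      (((range (N+1)).filter (fun j => ∀ a ∈ A, (σ.symm a : ℕ) < j)).card : ℝ) =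
    ((N+1).factorial : ℝ) / ((A.card : ℝ) + 1) := by
  classical
  have hA : A.card ≤ N := by simpa using A.card_le_univ
  have key : (∑ σ : Equiv.Perm (Fin N),
      ((range (N+1)).filter (fun j => ∀ a ∈ A, (σ.symm a : ℕ) < j)).card) * N.choose A.card =
      N.factorial * (N+1).choose (A.card+1) := by
    simp only [Finset.card_filter]
    rw [Finset.sum_comm, Finset.sum_mul]
    simp only [← Finset.card_filter]
    rw [Finset.sum_congr rfl (fun j hj => perm_count N j (by simp at hj; omega) A),
      ← Finset.mul_sum]
    congr 1
    rw [← Nat.sum_Icc_choose]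
    symm
    apply Finset.sum_subset
    · intro x
      simp
    · intro x _ hx'
      apply Nat.choose_eq_zero_of_lt
      simp at *
      omega
  have h2 := Nat.add_one_mul_choose_eq N A.card
  have hpos : (0:ℝ) < N.choose A.card := by exact_mod_cast Nat.choose_pos hA
  rw [eq_div_iff (by positivity)]
  apply mul_right_cancel₀ hpos.ne'
  have key' := congrArg (Nat.cast : ℕ → ℝ) key
  have h2' := congrArg (Nat.cast : ℕ → ℝ) h2
  rw [Nat.factorial_succ]
  push_cast at key' h2' ⊢
  linear_combination ((A.card : ℝ) + 1) * key' - (N.factorial : ℝ) * h2'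

theorem lines_nonempty (n : ℕ) (hn : 1 ≤ n) (L : Finset (Fin n × Fin n))
    (hL : L ∈ bingoLines n) : L.Nonempty := by
  simp only [bingoLines, mem_union, mem_image, mem_univ, true_and, mem_insert,
    mem_singleton] at hL
  rcases hL with (⟨i, rfl⟩ | ⟨i, rfl⟩) | rfl | rfl
  · exact ⟨(i, i), by simp [bingoRow]⟩
  · exact ⟨(i, i), by simp [bingoCol]⟩
  · exact ⟨(⟨0, hn⟩, ⟨0, hn⟩), by simp [bingoDiag]⟩
  · exact ⟨(⟨0, hn⟩, ⟨n - 1, by omega⟩), by simp [bingoAntiDiag]⟩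

theorem wins_iff (n m : ℕ) (c : Fin n × Fin n → Fin (m * n))
    (σ : Equiv.Perm (Fin (m * n))) (k : ℕ) :
    BingoWins n m c σ k ↔ ∃ L ∈ bingoLines n, ∀ s ∈ L, (σ.symm (c s) : ℕ) < k := by
  unfold BingoWins
  refine exists_congr fun L => and_congr_right fun _ => forall₂_congr fun s _ => ?_
  constructor
  · rintro ⟨t, ht, h⟩
    rw [← h]
    simpa using ht
  · intro h
    exact ⟨_, h, by simp⟩

theorem bingo_pointwise (n m : ℕ) (hn : 1 ≤ n) (c : Fin n × Fin n → Fin (m * n))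
    (σ : Equiv.Perm (Fin (m * n))) (b : ℕ)
    (hb : IsLeast {k : ℕ | 1 ≤ k ∧ BingoWins n m c σ k} b) (hN : 1 ≤ m * n) :
    ((m * n : ℕ) : ℝ) + 1 - b = ∑ X ∈ (bingoLines n).powerset.filter (fun X => X.Nonempty),
      (-1 : ℝ) ^ (X.card + 1) * (((range (m * n + 1)).filter
        (fun j => ∀ a ∈ (X.sup id).image c, (σ.symm a : ℕ) < j)).card : ℝ) := by
  classical
  let S : Finset (Fin n × Fin n) → Finset ℕ := fun L =>
    (range (m * n + 1)).filter (fun j => ∀ s ∈ L, (σ.symm (c s) : ℕ) < j)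
  have hne : (bingoLines n).Nonempty := ⟨bingoDiag n, by simp [bingoLines]⟩
  have hbN : b ≤ m * n := by
    apply hb.2
    refine ⟨hN, (wins_iff ..).2 ?_⟩
    obtain ⟨L, hL⟩ := hne
    exact ⟨L, hL, fun s _ => (σ.symm (c s)).2⟩
  have hU : (bingoLines n).biUnion S = Finset.Ico b (m * n + 1) := by
    ext k
    simp only [S, mem_biUnion, mem_filter, mem_range, mem_Ico]
    constructor
    · rintro ⟨L, hL, hk, h⟩
      refine ⟨hb.2 ⟨?_, (wins_iff ..).2 ⟨L, hL, h⟩⟩, hk⟩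
      obtain ⟨s, hs⟩ := lines_nonempty n hn L hL
      have := h s hs
      omega
    · rintro ⟨h1, h2⟩
      obtain ⟨L, hL, h⟩ := (wins_iff ..).1 hb.1.2
      exact ⟨L, hL, h2, fun s hs => (h s hs).trans_le h1⟩
  have hie := Finset.inclusion_exclusion_card_biUnion (bingoLines n) S
  rw [hU, Nat.card_Ico] at hie
  have hie' := congrArg (Int.cast : ℤ → ℝ) hie
  push_cast [Nat.cast_sub (show b ≤ m * n + 1 by omega)] at hie'
  push_cast
  rw [hie', ← Finset.sum_coe_sort ((bingoLines n).powerset.filter (fun X => X.Nonempty))]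
  refine Finset.sum_congr rfl fun X _ => ?_
  congr 3
  ext k
  have hX : X.1.Nonempty := (mem_filter.1 X.2).2
  simp only [S, mem_inf', mem_filter, mem_image, mem_sup, id]
  constructor
  · intro h
    obtain ⟨L, hL⟩ := hX
    refine ⟨(h L hL).1, ?_⟩
    rintro a ⟨s, ⟨L', hL', hs⟩, rfl⟩
    exact (h L' hL').2 s hs
  · rintro ⟨h1, h2⟩ L hL
    exact ⟨h1, fun s hs => h2 _ ⟨s, ⟨L, hL, hs⟩, rfl⟩⟩

/-- for fixed `n`, the expected number of calls is a linear function of `m`,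
with slope `n·(1 - S_n)` and intercept `1 - S_n`, independently of `m` and of the card. -/
theorem bingo_expectation_linear_in_m (n : ℕ) (hn : 1 ≤ n) :
    ∃ a b : ℝ, a = (n : ℝ) * (1 - Sn n) ∧ b = 1 - Sn n ∧
      ∀ m : ℕ, n ≤ m →
        ∀ c : Fin n × Fin n → Fin (m * n), IsBingoCard n m c →
          ∀ B : Equiv.Perm (Fin (m * n)) → ℕ,
            (∀ σ, IsLeast {k : ℕ | 1 ≤ k ∧ BingoWins n m c σ k} (B σ)) →
              (∑ σ : Equiv.Perm (Fin (m * n)), (B σ : ℝ)) / (Nat.factorial (m * n)) =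
                a * (m : ℝ) + b := by
  refine ⟨_, _, rfl, rfl, ?_⟩
  intro m hm c hc B hB
  have hN : 1 ≤ m * n := Nat.mul_pos (by omega) hn
  have h : ∑ σ : Equiv.Perm (Fin (m * n)), (((m * n : ℕ) : ℝ) + 1 - B σ) =
      ((m * n + 1).factorial : ℝ) * Sn n := by
    rw [Finset.sum_congr rfl (fun σ _ => bingo_pointwise n m hn c σ (B σ) (hB σ) hN),
      Finset.sum_comm, Sn, Finset.mul_sum]
    refine Finset.sum_congr rfl fun X _ => ?_
    rw [← Finset.mul_sum, perm_sum, Finset.card_image_of_injective _ hc.1]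
    ring
  rw [Finset.sum_sub_distrib, Finset.sum_const, Finset.card_univ, Fintype.card_perm,
    Fintype.card_fin, nsmul_eq_mul, Nat.factorial_succ] at h
  have hf : ((m * n).factorial : ℝ) ≠ 0 := by exact_mod_cast Nat.factorial_ne_zero _
  rw [div_eq_iff hf]
  push_cast at h ⊢
  linear_combination -h
end

section
/- In the N-player (n,m)-Bingo game with fixed cards c_1,…,c_N, the expected number of calls until some player achieves Bingo equals E[B_N] = (m·n + 1)·(1 − S_{n,N}), where S_{n,N} = Σ_{∅ ≠ Y ⊆ 𝓛_N} (−1)^{|Y|+1} / (m(Y)+1). -/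
open Finset

/-- The set `𝓛_N` of distinct number-sets of winning lines across the `N` cards. -/
def bingoLinesN (n m N : ℕ) (c : Fin N → Fin n × Fin n → Fin (m * n)) :
    Finset (Finset (Fin (m * n))) :=
  ((Finset.univ : Finset (Fin N)) ×ˢ bingoLines n).image
    (fun q => q.2.image (c q.1))

/-- Some number-set in `𝓛_N` is contained among the first `k` calls of `σ`. -/
def BingoWinsN (n m N : ℕ) (c : Fin N → Fin n × Fin n → Fin (m * n))
    (σ : Equiv.Perm (Fin (m * n))) (k : ℕ) : Prop :=
  ∃ A ∈ bingoLinesN n m N c, ∀ x ∈ A, ∃ t : Fin (m * n), (t : ℕ) < k ∧ σ t = x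

/-- `S_{n,N}` for a fixed realization of the `N` cards. -/
noncomputable def SnN (n m N : ℕ) (c : Fin N → Fin n × Fin n → Fin (m * n)) : ℝ :=
  ∑ Y ∈ (bingoLinesN n m N c).powerset.filter (fun Y => Y.Nonempty),
    (-1 : ℝ) ^ (Y.card + 1) / (((Y.sup id).card : ℝ) + 1)

open Classical in
/-- the number of `σ` for which `x` is last among `insert x U` -/
theorem bingo_aux_count (M : ℕ) (U : Finset (Fin M)) (x : Fin M) (hx : x ∉ U) :
    ((U.card : ℝ) + 1) * ∑ σ : Equiv.Perm (Fin M),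
      (if ∀ u ∈ U, σ.symm u < σ.symm x then (1 : ℝ) else 0) = (Nat.factorial M : ℝ) := by
  set V := insert x U with hV
  have hxV : x ∈ V := by simp [hV]
  have key : ∀ y ∈ V, ∑ σ : Equiv.Perm (Fin M),
      (if ∀ u ∈ V, σ.symm u ≤ σ.symm y then (1 : ℝ) else 0) =
      ∑ σ : Equiv.Perm (Fin M), (if ∀ u ∈ V, σ.symm u ≤ σ.symm x then (1 : ℝ) else 0) := by
    intro y hy
    refine Fintype.sum_equiv (Equiv.mulLeft (Equiv.swap x y)) _ _ ?_
    intro σ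
    have hs : ∀ u, (Equiv.swap x y * σ).symm u = σ.symm (Equiv.swap x y u) := by
      intro u
      rw [Equiv.symm_apply_eq]
      simp
    have hmem : ∀ u ∈ V, Equiv.swap x y u ∈ V := by
      intro u hu
      rw [Equiv.swap_apply_def]
      split_ifs <;> assumption
    simp only [Equiv.coe_mulLeft, hs, Equiv.swap_apply_left]
    congr 1
    apply propext
    constructor
    · intro h u hu
      exact h _ (hmem u hu)
    · intro h u hu
      have := h _ (hmem u hu)
      simpa using this
  have hone : ∀ σ : Equiv.Perm (Fin M),
      ∑ y ∈ V, (if ∀ u ∈ V, σ.symm u ≤ σ.symm y then (1 : ℝ) else 0) = 1 := by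
    intro σ
    obtain ⟨y, hy, hmax⟩ := Finset.exists_max_image V (fun u => σ.symm u) ⟨x, hxV⟩
    rw [Finset.sum_eq_single_of_mem y hy, if_pos hmax]
    intro b hb hne
    rw [if_neg]
    intro h
    exact hne (σ.symm.injective (le_antisymm (hmax b hb) (h y hy)))
  have hcard : (V.card : ℝ) = (U.card : ℝ) + 1 := by
    rw [hV, Finset.card_insert_of_notMem hx]; push_cast; rfl
  have hconv : ∀ σ : Equiv.Perm (Fin M),
      (if ∀ u ∈ U, σ.symm u < σ.symm x then (1 : ℝ) else 0) =
      (if ∀ u ∈ V, σ.symm u ≤ σ.symm x then (1 : ℝ) else 0) := by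
    intro σ
    congr 1
    apply propext
    constructor
    · intro h u hu
      rcases Finset.mem_insert.1 hu with rfl | hu
      · exact le_rfl
      · exact (h u hu).le
    · intro h u hu
      refine lt_of_le_of_ne (h u (Finset.mem_insert_of_mem hu)) ?_
      intro he
      exact hx (σ.symm.injective he ▸ hu)
  simp_rw [hconv]
  rw [← hcard, ← nsmul_eq_mul, ← Finset.sum_const, ← Finset.sum_congr rfl key, Finset.sum_comm]
  simp_rw [hone]
  simp [Fintype.card_perm]

open Classical in
theorem bingo_aux_sum (M : ℕ) (U : Finset (Fin M)) :
    ∑ σ : Equiv.Perm (Fin M), ∑ k ∈ Finset.range (M + 1),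
      (if ∀ u ∈ U, (σ.symm u : ℕ) < k then (1 : ℝ) else 0) =
      (Nat.factorial M : ℝ) * (M + 1) / ((U.card : ℝ) + 1) := by
  have h1 : ∀ σ : Equiv.Perm (Fin M), ∑ k ∈ Finset.range (M + 1),
      (if ∀ u ∈ U, (σ.symm u : ℕ) < k then (1 : ℝ) else 0) =
      (∑ x : Fin M, (if ∀ u ∈ U, σ.symm u < σ.symm x then (1 : ℝ) else 0)) + 1 := by
    intro σ
    rw [Finset.sum_range_succ, if_pos (fun u _ => (σ.symm u).isLt), Finset.sum_range]
    congr 1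
    symm
    refine Fintype.sum_equiv σ.symm _
      (fun i : Fin M => if ∀ u ∈ U, (σ.symm u : ℕ) < (i : ℕ) then (1 : ℝ) else 0) ?_
    intro x
    simp only [Fin.lt_def]
  simp_rw [h1]
  rw [Finset.sum_add_distrib, Finset.sum_comm]
  have hpos : (0 : ℝ) < (U.card : ℝ) + 1 := by positivity
  have h2 : ∀ x : Fin M, ∑ σ : Equiv.Perm (Fin M),
      (if ∀ u ∈ U, σ.symm u < σ.symm x then (1 : ℝ) else 0) =
      if x ∈ Uᶜ then (Nat.factorial M : ℝ) / ((U.card : ℝ) + 1) else 0 := by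
    intro x
    by_cases hx : x ∈ U
    · rw [if_neg (by simpa using hx)]
      refine Finset.sum_eq_zero fun σ _ => if_neg fun h => lt_irrefl _ (h x hx)
    · rw [if_pos (by simpa using hx), eq_div_iff hpos.ne', mul_comm]
      exact bingo_aux_count M U x hx
  simp_rw [h2]
  rw [Finset.sum_ite_mem, Finset.univ_inter, Finset.sum_const, Finset.card_compl,
    nsmul_eq_mul, Fintype.card_fin, Nat.cast_sub (by simpa using Finset.card_le_univ U)]
  simp only [Finset.sum_const, Finset.card_univ, Fintype.card_perm, Fintype.card_fin,
    nsmul_eq_mul, mul_one]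
  field_simp
  ring

theorem bingo_aux_lines (n : ℕ) (hn : 1 ≤ n) : ∀ L ∈ bingoLines n, L.Nonempty := by
  intro L hL
  have z : Fin n := ⟨0, hn⟩
  simp only [bingoLines, Finset.mem_union, Finset.mem_image, Finset.mem_univ, true_and,
    Finset.mem_insert, Finset.mem_singleton] at hL
  rcases hL with (⟨i, rfl⟩ | ⟨i, rfl⟩) | rfl | rfl
  · exact ⟨(i, i), by simp [bingoRow]⟩
  · exact ⟨(i, i), by simp [bingoCol]⟩
  · exact ⟨(z, z), by simp [bingoDiag]⟩
  · exact ⟨(⟨0, hn⟩, ⟨n - 1, by omega⟩), by simp [bingoAntiDiag]⟩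

open Classical in
theorem bingo_aux_main (M : ℕ) (F : Finset (Finset (Fin M)))
    (B : Equiv.Perm (Fin M) → ℕ) (hBM : ∀ σ, B σ ≤ M + 1)
    (hB : ∀ σ, ∀ k, k < M + 1 → (k < B σ ↔ ¬ ∃ A ∈ F, ∀ x ∈ A, (σ.symm x : ℕ) < k)) :
    ∑ σ, (B σ : ℝ) = ∑ Y ∈ F.powerset, (-1 : ℝ) ^ Y.card *
      ((Nat.factorial M : ℝ) * (M + 1) / (((Y.sup id).card : ℝ) + 1)) := by
  have h1 : ∀ σ, (B σ : ℝ) = ∑ Y ∈ F.powerset, (-1 : ℝ) ^ Y.card *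
      ∑ k ∈ Finset.range (M + 1),
        (if ∀ u ∈ Y.sup id, (σ.symm u : ℕ) < k then (1 : ℝ) else 0) := by
    intro σ
    have e1 : (B σ : ℝ) = ∑ k ∈ Finset.range (M + 1), (if k < B σ then (1 : ℝ) else 0) := by
      rw [Finset.sum_boole]
      congr 1
      have : (Finset.range (M + 1)).filter (fun k => k < B σ) = Finset.range (B σ) := by
        ext k
        have := hBM σ
        simp only [Finset.mem_filter, Finset.mem_range]
        omega
      rw [this, Finset.card_range]
    rw [e1]
    simp_rw [Finset.mul_sum]
    rw [Finset.sum_comm]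
    refine Finset.sum_congr rfl fun k hk => ?_
    have e2 : (if k < B σ then (1 : ℝ) else 0) =
        ∏ A ∈ F, (1 + -(if ∀ x ∈ A, (σ.symm x : ℕ) < k then (1 : ℝ) else 0)) := by
      have := hB σ k (Finset.mem_range.1 hk)
      split_ifs with h
      · rw [this] at h
        symm
        refine Finset.prod_eq_one fun A hA => ?_
        rw [if_neg (fun hh => h ⟨A, hA, hh⟩)]
        simp
      · rw [this, not_not] at h
        obtain ⟨A, hA, hh⟩ := h
        symm
        refine Finset.prod_eq_zero hA ?_
        rw [if_pos hh]
        simp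
    rw [e2, Finset.prod_one_add]
    refine Finset.sum_congr rfl fun Y _ => ?_
    rw [Finset.prod_neg, Finset.prod_boole]
    congr 2
    apply propext
    simp only [Finset.mem_sup, id]
    constructor
    · rintro h u ⟨A, hA, hu⟩
      exact h A hA u hu
    · intro h A hA u hu
      exact h u ⟨A, hA, hu⟩
  simp_rw [h1]
  rw [Finset.sum_comm]
  refine Finset.sum_congr rfl fun Y _ => ?_
  rw [← Finset.mul_sum, bingo_aux_sum]

/-- in the `N`-player `(n,m)`-Bingo game with fixed cards, the expected
number of calls until some player achieves Bingo is `(m·n + 1)·(1 - S_{n,N})`. -/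
theorem bingo_multiplayer_expectation (n m N : ℕ) (hn : 1 ≤ n) (hm : n ≤ m) (hN : 1 ≤ N)
    (c : Fin N → Fin n × Fin n → Fin (m * n)) (hc : ∀ a, IsBingoCard n m (c a))
    (B : Equiv.Perm (Fin (m * n)) → ℕ)
    (hB : ∀ σ, IsLeast {k : ℕ | 1 ≤ k ∧ BingoWinsN n m N c σ k} (B σ)) :
    (∑ σ : Equiv.Perm (Fin (m * n)), (B σ : ℝ)) / (Nat.factorial (m * n)) =
      ((m * n : ℕ) + 1) * (1 - SnN n m N c) := by
  classical
  have hne : ∀ A ∈ bingoLinesN n m N c, A.Nonempty := by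
    intro A hA
    simp only [bingoLinesN, Finset.mem_image, Finset.mem_product] at hA
    obtain ⟨q, ⟨_, hq⟩, rfl⟩ := hA
    exact (bingo_aux_lines n hn q.2 hq).image _
  have hF : (bingoLinesN n m N c).Nonempty := by
    refine ⟨(bingoDiag n).image (c ⟨0, hN⟩), ?_⟩
    simp only [bingoLinesN, Finset.mem_image, Finset.mem_product]
    exact ⟨(⟨0, hN⟩, bingoDiag n), ⟨Finset.mem_univ _, by simp [bingoLines]⟩, rfl⟩
  have hW : ∀ σ k, BingoWinsN n m N c σ k ↔
      ∃ A ∈ bingoLinesN n m N c, ∀ x ∈ A, (σ.symm x : ℕ) < k := by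
    intro σ k
    unfold BingoWinsN
    refine exists_congr fun A => and_congr_right fun _ => forall₂_congr fun x _ => ?_
    constructor
    · rintro ⟨t, ht, rfl⟩
      simpa using ht
    · intro h
      exact ⟨σ.symm x, h, by simp⟩
  have hM : ∀ σ, B σ ≤ m * n + 1 := by
    intro σ
    refine (hB σ).2 ⟨by omega, ?_⟩
    rw [hW]
    obtain ⟨A, hA⟩ := hF
    exact ⟨A, hA, fun x _ => (σ.symm x).isLt.trans (Nat.lt_succ_self _)⟩
  have hmain := bingo_aux_main (m * n) (bingoLinesN n m N c) B hM (by
    intro σ k _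
    constructor
    · rintro hk ⟨A, hA, hAk⟩
      have hk1 : 1 ≤ k := by
        obtain ⟨x, hx⟩ := hne A hA
        have := hAk x hx
        omega
      have := (hB σ).2 ⟨hk1, (hW σ k).2 ⟨A, hA, hAk⟩⟩
      omega
    · intro h
      by_contra hk
      obtain ⟨A, hA, hAB⟩ := (hW σ _).1 (hB σ).1.2
      exact h ⟨A, hA, fun x hx => (hAB x hx).trans_le (by omega)⟩)
  have hfac : (Nat.factorial (m * n) : ℝ) ≠ 0 := by positivity
  rw [hmain, div_eq_iff hfac]
  have hS : ∑ Y ∈ (bingoLinesN n m N c).powerset, (-1 : ℝ) ^ Y.card *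
      (1 / (((Y.sup id).card : ℝ) + 1)) = 1 - SnN n m N c := by
    rw [← Finset.sum_filter_add_sum_filter_not _ (fun Y => Y.Nonempty)]
    have h0 : (bingoLinesN n m N c).powerset.filter (fun Y => ¬ Y.Nonempty) = {∅} := by
      ext Y
      simp only [Finset.mem_filter, Finset.mem_powerset, Finset.not_nonempty_iff_eq_empty,
        Finset.mem_singleton]
      constructor
      · exact fun h => h.2
      · rintro rfl
        simp
    rw [h0, Finset.sum_singleton, SnN, add_comm, sub_eq_add_neg, ← Finset.sum_neg_distrib]
    congr 1
    · simp
    · refine Finset.sum_congr ?_ fun Y _ => ?_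
      · congr
      · rw [pow_succ]; ring
  rw [← hS, Finset.mul_sum, Finset.sum_mul]
  refine Finset.sum_congr rfl fun Y _ => ?_
  push_cast
  ring
end
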